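/- arXiv:0802.3719 — 6 statements merged into one kernel-verified Lean document; each statement's English description precedes it below -/
import Mathlib

section
/- Let X be a path-connected topological space with basepoint x₀. There is a bijection between the set of (free) homotopy classes of continuous maps S¹ → X and the set of conjugacy classes of the fundamental group π₁(X, x₀), i.e., the set of orbits of the action of π₁(X, x₀) on itself by conjugation. -/
/-- The setoid of free homotopy of continuous maps `S¹ → X`. -/
def freeHomotopySetoid (X : Type*) [TopologicalSpace X] : Setoid C(Circle, X) :=
  ⟨ContinuousMap.Homotopic, ContinuousMap.Homotopic.equivalence⟩

open scoped unitInterval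

namespace FreeHtpy

variable {X : Type*} [TopologicalSpace X]

/-- The standard parametrisation of the circle. -/
noncomputable def e : C(I, Circle) :=
  ⟨fun t => Circle.exp (2 * Real.pi * (t : ℝ)), by fun_prop⟩

theorem e_apply (t : I) : e t = Circle.exp (2 * Real.pi * (t : ℝ)) := rfl

theorem e_zero : e 0 = 1 := by simp [e_apply]

theorem e_one : e 1 = 1 := by simp [e_apply]

theorem e_surj : Function.Surjective e := by
  intro z
  obtain ⟨x, rfl⟩ := Circle.exp_surjective z
  have hp : (0 : ℝ) < 2 * Real.pi := Real.two_pi_pos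
  refine ⟨⟨Int.fract (x / (2 * Real.pi)), Int.fract_nonneg _, (Int.fract_lt_one _).le⟩, ?_⟩
  rw [e_apply, Circle.exp_eq_exp]
  refine ⟨-⌊x / (2 * Real.pi)⌋, ?_⟩
  simp only [Int.fract]
  push_cast
  field_simp
  ring

theorem e_eq {s t : I} (h : e s = e t) : s = t ∨ (s = 0 ∧ t = 1) ∨ (s = 1 ∧ t = 0) := by
  rw [e_apply, e_apply, Circle.exp_eq_exp] at h
  obtain ⟨m, hm⟩ := h
  have hp : (0 : ℝ) < 2 * Real.pi := Real.two_pi_pos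
  have h1 : (s : ℝ) = t + m := by
    have : 2 * Real.pi * (s : ℝ) = 2 * Real.pi * (t + m) := by linarith
    exact mul_left_cancel₀ hp.ne' this
  have hs0 := s.2.1
  have hs1 := s.2.2
  have ht0 := t.2.1
  have ht1 := t.2.2
  have hm1 : m ≤ 1 := by
    have : (m : ℝ) ≤ 1 := by linarith
    exact_mod_cast this
  have hm2 : -1 ≤ m := by
    have : (-1 : ℝ) ≤ m := by linarith
    exact_mod_cast this
  have h3 : m = -1 ∨ m = 0 ∨ m = 1 := by omega
  rcases h3 with rfl | rfl | rfl <;> push_cast at h1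
  · right; left
    constructor <;> apply Subtype.ext <;> simp only [Set.Icc.coe_zero, Set.Icc.coe_one] <;> linarith
  · left
    ext; linarith
  · right; right
    constructor <;> apply Subtype.ext <;> simp only [Set.Icc.coe_zero, Set.Icc.coe_one] <;> linarith

theorem e_quot : Topology.IsQuotientMap e :=
  Topology.IsQuotientMap.of_surjective_continuous e_surj e.continuous

/-- `id × e`. -/
noncomputable def ee : C(I × I, I × Circle) := (ContinuousMap.id I).prodMap e

theorem ee_quot : Topology.IsQuotientMap ee :=
  Topology.IsQuotientMap.of_surjective_continuous
    (Function.surjective_id.prodMap e_surj) ee.continuous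

theorem factors (p : C(I, X)) (h : p 0 = p 1) : Function.FactorsThrough p e := by
  intro s t hst
  rcases e_eq hst with rfl | ⟨rfl, rfl⟩ | ⟨rfl, rfl⟩
  · rfl
  · exact h
  · exact h.symm

/-- Map from the circle induced by a loop. -/
noncomputable def ofLoop (p : C(I, X)) (h : p 0 = p 1) : C(Circle, X) :=
  e_quot.lift p (factors p h)

theorem ofLoop_e (p : C(I, X)) (h : p 0 = p 1) (t : I) : ofLoop p h (e t) = p t :=
  congrArg (fun f : C(I, X) => f t) (e_quot.lift_comp p (factors p h))

theorem homotopic_of_square (K : C(I × I, X)) (hK : ∀ s, K (s, 0) = K (s, 1))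
    (f g : C(Circle, X)) (hf : ∀ t, f (e t) = K (0, t)) (hg : ∀ t, g (e t) = K (1, t)) :
    f.Homotopic g := by
  have key : Function.FactorsThrough K ee := by
    rintro ⟨s, t⟩ ⟨s', t'⟩ hst
    obtain ⟨h1, h2⟩ := Prod.mk.inj hst
    change s = s' at h1
    subst h1
    rcases e_eq h2 with rfl | ⟨rfl, rfl⟩ | ⟨rfl, rfl⟩
    · rfl
    · exact hK s
    · exact (hK s).symm
  have hl : ∀ s t, ee_quot.lift K key (s, e t) = K (s, t) := fun s t =>
    congrArg (fun f : C(I × I, X) => f (s, t)) (ee_quot.lift_comp K key)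
  refine ⟨⟨ee_quot.lift K key, ?_, ?_⟩⟩
  · intro z
    obtain ⟨t, rfl⟩ := e_surj z
    exact (hl 0 t).trans (hf t).symm
  · intro z
    obtain ⟨t, rfl⟩ := e_surj z
    exact (hl 1 t).trans (hg t).symm

/-- Map from the circle induced by a loop given as a path. -/
noncomputable def ofPath {x : X} (p : Path x x) : C(Circle, X) :=
  ofLoop p.toContinuousMap (p.source.trans p.target.symm)

theorem ofPath_e {x : X} (p : Path x x) (t : I) : ofPath p (e t) = p t :=
  ofLoop_e _ _ t

theorem ofPath_congr {x : X} {p q : Path x x} (h : p.Homotopic q) :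
    (ofPath p).Homotopic (ofPath q) := by
  obtain ⟨F⟩ := h
  refine homotopic_of_square F.toContinuousMap (fun s => ?_) _ _ (fun t => ?_) (fun t => ?_)
  · exact (F.source s).trans (F.target s).symm
  · rw [ofPath_e]; exact (F.apply_zero t).symm
  · rw [ofPath_e]; exact (F.apply_one t).symm

/-- The tail of a path. -/
def tail {x y : X} (γ : Path x y) (s : I) : Path (γ s) y where
  toFun t := γ (max s t)
  continuous_toFun := by fun_prop
  source' := by simp
  target' := by
    have : max s (1 : I) = 1 := max_eq_right s.2.2
    simp [this]

theorem ofPath_conj {x y : X} (γ : Path x y) (q : Path y y) :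
    (ofPath (γ.trans (q.trans γ.symm))).Homotopic (ofPath q) := by
  have hc1 : Continuous ↿(tail γ) := by
    change Continuous (fun z : I × I => γ (max z.1 z.2))
    fun_prop
  have hc2 : Continuous ↿(fun s : I => (tail γ s).symm) := Path.symm_continuous_family _ hc1
  have hc3 : Continuous ↿(fun _ : I => q) := by
    change Continuous (fun z : I × I => q z.2)
    fun_prop
  have hc4 : Continuous ↿(fun s : I => q.trans (tail γ s).symm) :=
    Path.trans_continuous_family _ hc3 _ hc2
  have hc5 : Continuous ↿(fun s : I => (tail γ s).trans (q.trans (tail γ s).symm)) :=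
    Path.trans_continuous_family _ hc1 _ hc4
  have h1 : tail γ 1 = (Path.refl y).cast γ.target rfl := by
    ext t
    have : max (1 : I) t = 1 := max_eq_left t.2.2
    change γ (max 1 t) = y
    simp [this]
  have h0 : tail γ 0 = γ.cast γ.source rfl := by
    ext t
    have : max (0 : I) t = t := max_eq_right t.2.1
    change γ (max 0 t) = γ t
    simp [this]
  have hA : (ofPath (γ.trans (q.trans γ.symm))).Homotopic
      (ofPath ((Path.refl y).trans (q.trans (Path.refl y).symm))) := by
    refine homotopic_of_square
      ⟨fun z : I × I => ((tail γ z.1).trans (q.trans (tail γ z.1).symm)) z.2, hc5⟩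
      (fun s => ?_) _ _ (fun t => ?_) (fun t => ?_)
    · change ((tail γ s).trans (q.trans (tail γ s).symm)) 0 =
        ((tail γ s).trans (q.trans (tail γ s).symm)) 1
      rw [Path.source, Path.target]
    · rw [ofPath_e]
      change _ = ((tail γ 0).trans (q.trans (tail γ 0).symm)) t
      rw [h0]
      simp [Path.trans_apply]
    · rw [ofPath_e]
      change _ = ((tail γ 1).trans (q.trans (tail γ 1).symm)) t
      rw [h1]
      simp [Path.trans_apply]
  refine hA.trans (ofPath_congr ?_)
  rw [Path.refl_symm]
  exact (Path.Homotopic.trans ⟨Path.Homotopy.reflTrans _⟩ ⟨Path.Homotopy.transRefl _⟩)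

/-- The standard loop. -/
noncomputable def eP : Path (1 : Circle) 1 := ⟨e, e_zero, e_one⟩

theorem ofPath_one {x : X} (p : Path x x) : ofPath p 1 = x := by
  rw [← e_zero, ofPath_e, p.source]

theorem conj_of_homotopic {x : X} {p q : Path x x} (h : (ofPath p).Homotopic (ofPath q)) :
    ∃ δ : Path x x, (p.trans δ).Homotopic (δ.trans q) := by
  obtain ⟨F⟩ := h
  refine ⟨(F.evalAt 1).cast (ofPath_one p).symm (ofPath_one q).symm, ?_⟩
  have := (Path.Homotopic.map_trans_evalAt F eP).pathCast (ofPath_one p).symm (ofPath_one q).symm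
  convert this using 1
  · ext t
    simp only [Path.trans_apply, Path.cast_coe, Path.map_coe, Function.comp]
    split_ifs
    · exact (ofPath_e p _).symm
    · rfl
  · ext t
    simp only [Path.trans_apply, Path.cast_coe, Path.map_coe, Function.comp]
    split_ifs
    · rfl
    · exact (ofPath_e q _).symm

/-- Class of a loop class. -/
noncomputable def psi0 (x₀ : X) (a : FundamentalGroup X x₀) : Quotient (freeHomotopySetoid X) :=
  Quotient.lift (fun p : Path x₀ x₀ => (Quotient.mk (freeHomotopySetoid X) (ofPath p)))
    (fun _ _ h => Quotient.sound (s := freeHomotopySetoid X) (ofPath_congr h))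
    (show Path.Homotopic.Quotient x₀ x₀ from a)

/-- Elements from loops. -/
def cls {x₀ : X} (p : Path x₀ x₀) : FundamentalGroup X x₀ := Path.Homotopic.Quotient.mk p

theorem psi0_cls {x₀ : X} (p : Path x₀ x₀) :
    psi0 x₀ (cls p) = Quotient.mk (freeHomotopySetoid X) (ofPath p) := rfl

theorem cls_surj {x₀ : X} (a : FundamentalGroup X x₀) : ∃ p, cls p = a :=
  Path.Homotopic.Quotient.mk_surjective a

theorem cls_mul {x₀ : X} (p q : Path x₀ x₀) : cls p * cls q = cls (q.trans p) := rfl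

theorem cls_inv {x₀ : X} (p : Path x₀ x₀) : (cls p)⁻¹ = cls p.symm := rfl

theorem psi0_conj {x₀ : X} {a b : FundamentalGroup X x₀} (h : IsConj a b) :
    psi0 x₀ a = psi0 x₀ b := by
  obtain ⟨c, hc⟩ := isConj_iff.1 h.symm
  subst hc
  obtain ⟨p, rfl⟩ := cls_surj b
  obtain ⟨γ, rfl⟩ := cls_surj c
  have : cls γ * cls p * (cls γ)⁻¹ = cls (γ.symm.trans (p.trans γ.symm.symm)) := by
    rw [cls_inv, cls_mul, cls_mul, Path.symm_symm]
  rw [this, psi0_cls, psi0_cls]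
  exact Quotient.sound (s := freeHomotopySetoid X) (ofPath_conj _ _)

theorem psi0_inj {x₀ : X} {a b : FundamentalGroup X x₀} (h : psi0 x₀ a = psi0 x₀ b) :
    IsConj a b := by
  obtain ⟨p, rfl⟩ := cls_surj a
  obtain ⟨q, rfl⟩ := cls_surj b
  obtain ⟨δ, hδ⟩ := conj_of_homotopic (Quotient.exact (s := freeHomotopySetoid X) h)
  rw [isConj_iff]
  refine ⟨cls δ, ?_⟩
  rw [mul_inv_eq_iff_eq_mul, cls_mul, cls_mul]
  exact Path.Homotopic.Quotient.eq.2 hδ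

theorem psi0_surj [PathConnectedSpace X] (x₀ : X) : Function.Surjective (psi0 x₀) := by
  intro z
  obtain ⟨f, rfl⟩ := Quotient.exists_rep z
  let γ := PathConnectedSpace.somePath x₀ (f 1)
  let q : Path (f 1) (f 1) := eP.map f.continuous
  refine ⟨cls (γ.trans (q.trans γ.symm)), ?_⟩
  rw [psi0_cls]
  have hq : ofPath q = f := by
    ext z
    obtain ⟨t, rfl⟩ := e_surj z
    rw [ofPath_e]
    rfl
  apply Quotient.sound (s := freeHomotopySetoid X)
  have := ofPath_conj γ q
  rw [hq] at this
  exact this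

end FreeHtpy

/-- For a path-connected space `X` with basepoint `x₀`, the set of free homotopy classes
of continuous maps `S¹ → X` is in bijection with the set of conjugacy classes of the
fundamental group `π₁(X, x₀)`. -/
theorem freeHomotopyClasses_equiv_conjClasses
    (X : Type*) [TopologicalSpace X] [PathConnectedSpace X] (x₀ : X) :
    Nonempty (Quotient (freeHomotopySetoid X) ≃ ConjClasses (FundamentalGroup X x₀)) := by
  refine ⟨(Equiv.ofBijective (Quotient.lift (s := IsConj.setoid _) (FreeHtpy.psi0 x₀)
    (fun _ _ h => FreeHtpy.psi0_conj h)) ⟨?_, ?_⟩).symm⟩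
  · intro a b
    refine Quotient.inductionOn₂ a b (fun a b h => ?_)
    exact Quotient.sound (s := IsConj.setoid _) (FreeHtpy.psi0_inj h)
  · intro z
    obtain ⟨a, ha⟩ := FreeHtpy.psi0_surj x₀ z
    exact ⟨Quotient.mk _ a, ha⟩
end

section
/- Let T > 0 and let f : ℝ → ℂ be infinitely differentiable and periodic with period T, with Fourier coefficients c_k = (1/T)∫₀^T f(t)·exp(−2πikt/T) dt for k ∈ ℤ. Then the family k ↦ (1 + |k|)·‖c_k‖² is summable over k ∈ ℤ. -/
/-- For a smooth `T`-periodic function `f : ℝ → ℂ` with Fourier coefficients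
`c_k = (1/T) ∫₀ᵀ f(t) exp(-2πikt/T) dt`, the family `k ↦ (1 + |k|)·‖c_k‖²` is summable
over `k ∈ ℤ`. -/
theorem fourierCoeff_summable_hilbertSchmidt (T : ℝ) (hT : 0 < T) (f : ℝ → ℂ)
    (hf : ContDiff ℝ (⊤ : ℕ∞) f) (hper : Function.Periodic f T) :
    Summable (fun k : ℤ =>
      (1 + (|k| : ℝ)) *
        ‖(1 / (T : ℂ)) * ∫ t in (0 : ℝ)..T,
            f t * Complex.exp (-(2 * (Real.pi : ℂ) * Complex.I * (k : ℂ) * (t : ℂ)) / (T : ℂ))‖ ^ 2) := by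
  have hcoef : ∀ k : ℤ, (1 / (T : ℂ)) * ∫ t in (0 : ℝ)..T,
      f t * Complex.exp (-(2 * (Real.pi : ℂ) * Complex.I * (k : ℂ) * (t : ℂ)) / (T : ℂ))
      = fourierCoeffOn hT f k := by
    intro k
    rw [fourierCoeffOn_eq_integral, Complex.real_smul]
    congr 1
    · push_cast
      simp
    · refine intervalIntegral.integral_congr fun t _ => ?_
      simp only [fourier_coe_apply, smul_eq_mul]
      rw [mul_comm]
      congr 2
      push_cast
      rw [sub_zero]
      ring
  simp_rw [hcoef]
  have hL2 : ∀ g : ℝ → ℂ, Continuous g → Summable (fun k : ℤ => ‖fourierCoeffOn hT g k‖ ^ 2) := by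
    intro g hg
    refine (hasSum_sq_fourierCoeffOn hT ?_).summable
    obtain ⟨C, hC⟩ := isCompact_Icc.exists_bound_of_continuousOn (s := Set.Icc 0 T) hg.continuousOn
    refine MeasureTheory.MemLp.of_bound hg.aestronglyMeasurable C ?_
    refine (MeasureTheory.ae_restrict_iff' measurableSet_Ioc).2 (Filter.Eventually.of_forall ?_)
    exact fun x hx => hC x (Set.Ioc_subset_Icc_self hx)
  have hd : Continuous (deriv f) := hf.continuous_deriv (by simp)
  have hdf : Differentiable ℝ f := hf.differentiable (by simp)
  refine Summable.of_nonneg_of_le (fun k => by positivity) (fun k => ?_)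
    ((hL2 f hf.continuous).add ((hL2 _ hd).mul_left (T ^ 2)))
  rw [add_mul, one_mul]
  refine add_le_add le_rfl ?_
  by_cases hk : k = 0
  · subst hk
    simp
    positivity
  have h1 : (1 : ℝ) ≤ |(k : ℝ)| := by exact_mod_cast Int.one_le_abs hk
  have key := fourierCoeffOn_of_hasDerivAt hT hk (fun x _ => (hdf x).hasDerivAt)
    (hd.intervalIntegrable 0 T)
  have h0 : f T = f 0 := by simpa using hper 0
  have hn : ‖fourierCoeffOn hT f k‖ * |(k : ℝ)| ≤ T * ‖fourierCoeffOn hT (deriv f) k‖ := by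
    rw [key, h0]
    simp only [sub_self, mul_zero, zero_sub, Complex.ofReal_zero, sub_zero, norm_mul, norm_neg,
      norm_div, norm_one, Complex.norm_I, Complex.norm_real, Complex.norm_intCast, Real.norm_eq_abs,
      abs_of_pos hT, abs_of_pos Real.pi_pos, Complex.norm_ofNat, mul_one]
    have hpi := Real.pi_gt_three
    have hk0 : |(k : ℝ)| ≠ 0 := by positivity
    have : 1 / (2 * Real.pi * |(k : ℝ)|) * (T * ‖fourierCoeffOn hT (deriv f) k‖) * |(k : ℝ)|
        = (T * ‖fourierCoeffOn hT (deriv f) k‖) / (2 * Real.pi) := by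
      field_simp
    rw [this]
    exact div_le_self (by positivity) (by linarith)
  calc |(k : ℝ)| * ‖fourierCoeffOn hT f k‖ ^ 2
      ≤ |(k : ℝ)| ^ 2 * ‖fourierCoeffOn hT f k‖ ^ 2 := by
        gcongr
        nlinarith
    _ = (‖fourierCoeffOn hT f k‖ * |(k : ℝ)|) ^ 2 := by ring
    _ ≤ (T * ‖fourierCoeffOn hT (deriv f) k‖) ^ 2 := by gcongr
    _ = T ^ 2 * ‖fourierCoeffOn hT (deriv f) k‖ ^ 2 := by ring
end

section
/- A Laurent polynomial taking values in the unit circle on the unit circle is a monomial: let N ∈ ℕ and a : ℤ → ℂ be a function supported in {−N, …, N}, and set p(z) = Σ_{k=−N}^{N} a_k z^k for z ∈ ℂ, z ≠ 0. If |p(z)| = 1 for all z ∈ ℂ with |z| = 1, then there exist n ∈ ℤ and c ∈ ℂ with |c| = 1 such that p(z) = c·z^n for all z with |z| = 1 (equivalently, a_k = 0 for all k ≠ n and a_n = c). -/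
/-- A Laurent polynomial `p(z) = Σ_{k=-N}^{N} a_k z^k` with `|p(z)| = 1` for all `z` on the
unit circle is a monomial: there are `n : ℤ` and `c : ℂ` with `|c| = 1` such that `a_n = c`,
`a_k = 0` for `k ≠ n`, and `p(z) = c·zⁿ` on the unit circle. -/
theorem laurent_unimodular_on_circle_is_monomial (N : ℕ) (a : ℤ → ℂ)
    (hsupp : ∀ k : ℤ, a k ≠ 0 → k ∈ Finset.Icc (-(N : ℤ)) (N : ℤ))
    (hmod : ∀ z : ℂ, ‖z‖ = 1 → ‖∑ k ∈ Finset.Icc (-(N : ℤ)) (N : ℤ), a k * z ^ k‖ = 1) :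
    ∃ (n : ℤ) (c : ℂ), ‖c‖ = 1 ∧ a n = c ∧ (∀ k : ℤ, k ≠ n → a k = 0) ∧
      ∀ z : ℂ, ‖z‖ = 1 → (∑ k ∈ Finset.Icc (-(N : ℤ)) (N : ℤ), a k * z ^ k) = c * z ^ n := by
  classical
  set S := Finset.Icc (-(N : ℤ)) (N : ℤ) with hS
  let P : Polynomial ℂ := ∑ k ∈ S, Polynomial.monomial (k + N).toNat (a k)
  let Q : Polynomial ℂ := ∑ k ∈ S, Polynomial.monomial (N - k).toNat (starRingEnd ℂ (a k))
  have hP : ∀ z : ℂ, z ≠ 0 → P.eval z = z ^ N * ∑ k ∈ S, a k * z ^ k := by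
    intro z hz
    simp only [P, Polynomial.eval_finsetSum, Polynomial.eval_monomial, Finset.mul_sum]
    refine Finset.sum_congr rfl fun k hk => ?_
    rw [hS, Finset.mem_Icc] at hk
    have h : ((k + N).toNat : ℤ) = N + k := by omega
    rw [← zpow_natCast z (k + N).toNat, h, zpow_add₀ hz, zpow_natCast]
    ring
  have hQ : ∀ z : ℂ, ‖z‖ = 1 → Q.eval z = z ^ N * starRingEnd ℂ (∑ k ∈ S, a k * z ^ k) := by
    intro z hz1
    have hz : z ≠ 0 := by
      rintro rfl
      simp at hz1
    simp only [Q, Polynomial.eval_finsetSum, Polynomial.eval_monomial, Finset.mul_sum, map_sum]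
    refine Finset.sum_congr rfl fun k hk => ?_
    rw [hS, Finset.mem_Icc] at hk
    have h : ((N - k).toNat : ℤ) = N + -k := by omega
    rw [← zpow_natCast z (N - k).toNat, h, zpow_add₀ hz, zpow_natCast, map_mul, map_zpow₀,
      ← Complex.inv_eq_conj hz1, inv_zpow']
    ring
  have hPQ : P * Q = Polynomial.X ^ (2 * N) := by
    apply Polynomial.eq_of_infinite_eval_eq
    have hinf : (Metric.sphere (0 : ℂ) 1).Infinite := by
      apply Set.infinite_of_injective_forall_mem (f := fun n : ℕ =>
        Complex.exp ((1 / ((n : ℝ) + 1) : ℝ) * Complex.I))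
      · intro m n hmn
        have h := congrArg Complex.arg hmn
        have hb : ∀ n : ℕ, (1 / ((n : ℝ) + 1) : ℝ) ∈ Set.Ioc (-Real.pi) Real.pi := by
          intro n
          have h1 : 0 < (1 / ((n : ℝ) + 1) : ℝ) := by positivity
          have h2 : (1 / ((n : ℝ) + 1) : ℝ) ≤ 1 := by
            rw [div_le_one (by positivity)]
            have : (0 : ℝ) ≤ n := by positivity
            linarith
          have h3 := Real.pi_gt_three
          constructor <;> linarith
        have ht : ∀ n : ℕ, toIocMod Real.two_pi_pos (-Real.pi) (1 / ((n : ℝ) + 1)) =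
            1 / ((n : ℝ) + 1) := by
          intro n
          rw [toIocMod_eq_self, show -Real.pi + 2 * Real.pi = Real.pi by ring]
          exact hb n
        simp only [Complex.arg_exp_mul_I, ht] at h
        have h4 : (m : ℝ) + 1 = n + 1 := by
          rwa [one_div, one_div, inv_inj] at h
        exact_mod_cast add_right_cancel h4
      · intro n
        rw [mem_sphere_zero_iff_norm]
        exact Complex.norm_exp_ofReal_mul_I _
    refine hinf.mono fun z hz => ?_
    have hz1 : ‖z‖ = 1 := by simpa using hz
    have hz0 : z ≠ 0 := by
      rintro rfl
      simp at hz1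
    have h := Complex.mul_conj (∑ k ∈ S, a k * z ^ k)
    rw [Complex.normSq_eq_norm_sq, hmod z hz1] at h
    simp only [Set.mem_ofPred_eq, Polynomial.eval_mul, Polynomial.eval_pow, Polynomial.eval_X]
    rw [hP z hz0, hQ z hz1, mul_mul_mul_comm, h]
    push_cast
    ring
  obtain ⟨i, hi, hass⟩ := (dvd_prime_pow Polynomial.prime_X (2 * N)).1 (Dvd.intro Q hPQ)
  obtain ⟨u, hu⟩ := hass.symm
  obtain ⟨c, -, hc⟩ := Polynomial.isUnit_iff.1 u.isUnit
  rw [← hc, mul_comm] at hu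
  have hcoeff : ∀ k ∈ S, a k = P.coeff (k + N).toNat := by
    intro k hk
    simp only [P, Polynomial.finsetSum_coeff, Polynomial.coeff_monomial]
    rw [Finset.sum_eq_single_of_mem k hk]
    · simp
    · intro b hb hbk
      rw [hS, Finset.mem_Icc] at hb hk
      rw [if_neg]
      omega
  have hmemn : (i : ℤ) - N ∈ S := by
    rw [hS, Finset.mem_Icc]
    omega
  have han : a ((i : ℤ) - N) = c := by
    rw [hcoeff _ hmemn, ← hu, Polynomial.coeff_C_mul_X_pow, if_pos (by omega)]
  have hak : ∀ k : ℤ, k ≠ (i : ℤ) - N → a k = 0 := by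
    intro k hk
    by_contra hne
    have hkS := hsupp k hne
    apply hne
    rw [hcoeff k hkS, ← hu, Polynomial.coeff_C_mul_X_pow, if_neg]
    rw [Finset.mem_Icc] at hkS
    omega
  have hsum : ∀ z : ℂ, ∑ k ∈ S, a k * z ^ k = c * z ^ ((i : ℤ) - N) := by
    intro z
    rw [Finset.sum_eq_single_of_mem _ hmemn, han]
    intro b _ hb
    rw [hak b hb, zero_mul]
  refine ⟨(i : ℤ) - N, c, ?_, han, hak, fun z _ => hsum z⟩
  have h := hmod 1 (by simp)
  rw [hsum] at h
  simpa using h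
end

section
/- The polynomial loops in S¹ are not dense in the continuous loop group of S¹: the set of continuous maps f : S¹ → S¹ for which there exists a finitely supported a : ℤ → ℂ with f(z) = Σ_k a_k z^k for all z ∈ S¹ is not dense in the space C(S¹, S¹) of all continuous maps from the circle to itself, with the topology of uniform convergence. -/
open Polynomial in
/-- A polynomial loop takes values with equal squares at `1` and `-1` (it is a monomial). -/
lemma polyLoop_sq_eq (f : C(Circle, Circle)) (a : ℤ →₀ ℂ)
    (ha : ∀ z : Circle, (f z : ℂ) = a.sum fun k c => c * (z : ℂ) ^ k) :
    (f 1 : ℂ) ^ 2 = (f (-1) : ℂ) ^ 2 := by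
  obtain ⟨N, hN⟩ : ∃ N : ℕ, ∀ k ∈ a.support, k.natAbs ≤ N :=
    ⟨a.support.sup Int.natAbs, fun k hk => Finset.le_sup (f := Int.natAbs) hk⟩
  let p : ℂ[X] := ∑ k ∈ a.support, C (a k) * X ^ (N + k).toNat
  let q : ℂ[X] := ∑ k ∈ a.support, C (starRingEnd ℂ (a k)) * X ^ (N - k).toNat
  have hp : ∀ z : Circle, p.eval (z : ℂ) = (z : ℂ) ^ N * f z := by
    intro z
    rw [ha, Finsupp.sum, Finset.mul_sum]
    simp only [p, eval_finsetSum, eval_mul, eval_C, eval_pow, eval_X]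
    refine Finset.sum_congr rfl fun k hk => ?_
    have h1 : ((N + k).toNat : ℤ) = N + k := Int.toNat_of_nonneg (by have := hN k hk; omega)
    rw [← zpow_natCast, h1, zpow_add₀ z.coe_ne_zero, zpow_natCast]
    ring
  have hq : ∀ z : Circle, q.eval (z : ℂ) = (z : ℂ) ^ N * starRingEnd ℂ (f z) := by
    intro z
    rw [ha, Finsupp.sum, map_sum, Finset.mul_sum]
    simp only [q, eval_finsetSum, eval_mul, eval_C, eval_pow, eval_X]
    refine Finset.sum_congr rfl fun k hk => ?_
    have h1 : ((N - k).toNat : ℤ) = N - k := Int.toNat_of_nonneg (by have := hN k hk; omega)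
    rw [← zpow_natCast, h1, zpow_sub₀ z.coe_ne_zero, zpow_natCast, map_mul, map_zpow₀,
      ← Circle.coe_inv_eq_conj, Circle.coe_inv, inv_zpow]
    ring
  have hinf : (Set.range (fun z : Circle => (z : ℂ))).Infinite := by
    have : Infinite Circle := by
      refine Set.infinite_univ_iff.mp ?_
      have h2 : (Circle.exp '' Set.Ioc (-Real.pi) Real.pi).Infinite := by
        refine Set.Infinite.image ?_ (Set.Ioc_infinite (by linarith [Real.pi_pos]))
        intro x hx y hy h
        have := congrArg (fun z : Circle => Complex.arg z) h
        simpa only [Circle.arg_exp hx.1 hx.2, Circle.arg_exp hy.1 hy.2] using this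
      exact h2.mono (Set.subset_univ _)
    exact Set.infinite_range_of_injective Circle.coe_injective
  have hpq : p * q = X ^ (N + N) := by
    refine Polynomial.eq_of_infinite_eval_eq _ _ (hinf.mono ?_)
    rintro _ ⟨z, rfl⟩
    have : (f z : ℂ) * starRingEnd ℂ (f z) = 1 := by
      rw [Complex.mul_conj, Circle.normSq_coe]; simp
    simp only [Set.mem_ofPred_eq, eval_mul, eval_pow, eval_X, hp, hq]
    linear_combination (z : ℂ) ^ (N + N) * this
  obtain ⟨i, -, u, hu⟩ := (dvd_prime_pow (prime_X (R := ℂ)) (N + N)).mp (Dvd.intro q hpq)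
  obtain ⟨v, hv, hvu⟩ := Polynomial.isUnit_iff.mp u.isUnit
  rw [← hvu] at hu
  have e1 := hp 1
  have e2 := hp (-1)
  have g1 := congrArg (eval 1) hu
  have g2 := congrArg (eval (-1)) hu
  simp only [eval_mul, eval_C, eval_pow, eval_X, one_pow] at g1 g2
  have hc : (((-1 : Circle)) : ℂ) = -1 := by simp
  rw [hc] at e2
  rw [Circle.coe_one, one_pow, one_mul] at e1
  have s1 : ((-1 : ℂ) ^ N) ^ 2 = 1 := by rw [← pow_mul, mul_comm, pow_mul]; simp
  have s2 : ((-1 : ℂ) ^ i) ^ 2 = 1 := by rw [← pow_mul, mul_comm, pow_mul]; simp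
  rw [e1] at g1
  rw [e2] at g2
  have hv0 : v ^ 2 ≠ 0 := pow_ne_zero _ hv.ne_zero
  refine mul_right_cancel₀ hv0 ?_
  have g1' := congrArg (· ^ 2) g1
  have g2' := congrArg (· ^ 2) g2
  simp only [mul_pow, s1, s2, one_mul, one_pow] at g1' g2'
  rw [g1', g2']

/-- The polynomial loops (restrictions to the circle of Laurent polynomials) are not dense
in the continuous loop group `C(S¹, S¹)` of the circle group, with the compact-open
topology (= uniform convergence). -/
theorem polynomial_loops_not_dense_in_loopGroup_circle :
    ¬ Dense {f : C(Circle, Circle) | ∃ a : ℤ →₀ ℂ,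
        ∀ z : Circle, (f z : ℂ) = a.sum fun k c => c * (z : ℂ) ^ k} := by
  intro hd
  have hcl : IsClosed {f : C(Circle, Circle) | (f 1 : ℂ) ^ 2 = (f (-1) : ℂ) ^ 2} := by
    refine isClosed_eq ?_ ?_
    · exact (Continuous.comp (continuous_subtype_val : Continuous fun z : Circle => (z : ℂ)) (continuous_eval_const 1)).pow 2
    · exact (Continuous.comp (continuous_subtype_val : Continuous fun z : Circle => (z : ℂ)) (continuous_eval_const (-1))).pow 2
  have hsub := hcl.closure_subset_iff.mpr
    (fun f (hf : ∃ a : ℤ →₀ ℂ, ∀ z : Circle, (f z : ℂ) = a.sum fun k c => c * (z : ℂ) ^ k) =>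
      hf.elim fun a ha => (polyLoop_sq_eq f a ha :))
  let g : C(Circle, Circle) := ⟨fun z => Circle.exp (Real.pi / 4 * (z : ℂ).re), by fun_prop⟩
  have hg : (g 1 : ℂ) ^ 2 = (g (-1) : ℂ) ^ 2 := hsub (hd g)
  have h1 : (g 1 : ℂ) ^ 2 = Complex.I := by
    simp only [g, ContinuousMap.coe_mk, Circle.coe_exp, ← Complex.exp_nat_mul]
    rw [← Complex.exp_pi_div_two_mul_I]
    congr 1; simp; ring
  have h2 : (g (-1) : ℂ) ^ 2 = -Complex.I := by
    simp only [g, ContinuousMap.coe_mk, Circle.coe_exp, ← Complex.exp_nat_mul]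
    rw [← Complex.exp_neg_pi_div_two_mul_I]
    congr 1; simp; ring
  rw [h1, h2] at hg
  have := congrArg Complex.im hg
  norm_num at this
end

section
/- Polynomial loops are dense in the continuous loop group of SU(2): the set of continuous maps f : S¹ → SU(2) such that each matrix entry of f is the restriction to S¹ of a Laurent polynomial (i.e., for each i, j there is a finitely supported a : ℤ → ℂ with (f(z))_{ij} = Σ_k a_k z^k for all z ∈ S¹) is dense in the space C(S¹, SU(2)) of continuous maps with the topology of uniform convergence. -/
open scoped Quaternion Topology
open Filter NormedSpace Topology

namespace PLoop

/-- The monomial `z ^ n` on the circle. -/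
noncomputable def mono (n : ℤ) : C(Circle, ℂ) :=
  ⟨fun z => ((z ^ n : Circle) : ℂ), continuous_induced_dom.comp (continuous_zpow n)⟩

lemma mono_apply (n : ℤ) (z : Circle) : mono n z = (z : ℂ) ^ n := by simp [mono]

/-- Laurent polynomials on the circle. -/
noncomputable def LP : StarSubalgebra ℂ C(Circle, ℂ) where
  toSubalgebra := Algebra.adjoin ℂ (Set.range mono)
  star_mem' := by
    change Algebra.adjoin ℂ (Set.range mono) ≤ star (Algebra.adjoin ℂ (Set.range mono))
    refine Algebra.adjoin_le ?_
    rintro - ⟨n, rfl⟩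
    refine Algebra.subset_adjoin ⟨-n, ?_⟩
    ext z
    simp only [mono, ContinuousMap.coe_mk, ContinuousMap.star_apply, zpow_neg]
    rw [Circle.coe_inv_eq_conj]
    rfl

lemma LP_coe : Subalgebra.toSubmodule LP.toSubalgebra = Submodule.span ℂ (Set.range mono) := by
  apply Algebra.adjoin_eq_span_of_subset
  refine Set.Subset.trans ?_ Submodule.subset_span
  intro x hx
  refine Submonoid.closure_induction (fun _ => id) ⟨0, ?_⟩ ?_ hx
  · ext1 z; simp [mono]
  · rintro - - - - ⟨m, rfl⟩ ⟨n, rfl⟩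
    refine ⟨m + n, ?_⟩
    ext1 z
    simp [mono, zpow_add]

lemma mem_LP {f : C(Circle, ℂ)} (hf : f ∈ LP) :
    ∃ a : ℤ →₀ ℂ, ∀ z : Circle, f z = a.sum fun k c => c * (z : ℂ) ^ k := by
  have h : f ∈ Submodule.span ℂ (Set.range mono) := by rw [← LP_coe]; exact hf
  rw [Finsupp.mem_span_range_iff_exists_finsupp] at h
  obtain ⟨a, rfl⟩ := h
  refine ⟨a, fun z => ?_⟩
  simp [Finsupp.sum, mono_apply]

lemma LP_sep : LP.SeparatesPoints := by
  intro x y hxy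
  refine ⟨_, ⟨mono 1, Algebra.subset_adjoin ⟨1, rfl⟩, rfl⟩, ?_⟩
  simpa [mono, Circle.coe_inj] using hxy

lemma LP_dense (f : C(Circle, ℂ)) : f ∈ closure (LP : Set C(Circle, ℂ)) := by
  have h := ContinuousMap.starSubalgebra_topologicalClosure_eq_top_of_separatesPoints LP LP_sep
  have : f ∈ LP.topologicalClosure := by rw [h]; trivial
  exact this

/-- Pointwise version of membership in `LP`. -/
def IsLP (g : Circle → ℂ) : Prop := ∃ h ∈ LP, ∀ z, h z = g z

lemma IsLP.add {f g : Circle → ℂ} (hf : IsLP f) (hg : IsLP g) : IsLP (fun z => f z + g z) := by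
  obtain ⟨a, ha, ha'⟩ := hf
  obtain ⟨b, hb, hb'⟩ := hg
  exact ⟨a + b, add_mem ha hb, fun z => by simp [ha', hb']⟩

lemma IsLP.sub {f g : Circle → ℂ} (hf : IsLP f) (hg : IsLP g) : IsLP (fun z => f z - g z) := by
  obtain ⟨a, ha, ha'⟩ := hf
  obtain ⟨b, hb, hb'⟩ := hg
  exact ⟨a - b, sub_mem ha hb, fun z => by simp [ha', hb']⟩

lemma IsLP.mul {f g : Circle → ℂ} (hf : IsLP f) (hg : IsLP g) : IsLP (fun z => f z * g z) := by
  obtain ⟨a, ha, ha'⟩ := hf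
  obtain ⟨b, hb, hb'⟩ := hg
  exact ⟨a * b, mul_mem ha hb, fun z => by simp [ha', hb']⟩

lemma IsLP.const (c : ℂ) : IsLP (fun _ => c) :=
  ⟨algebraMap ℂ _ c, algebraMap_mem LP c, fun z => by simp⟩

lemma IsLP.re {w : C(Circle, ℂ)} (hw : w ∈ LP) : IsLP (fun z => ((w z).re : ℂ)) := by
  refine ⟨(2⁻¹ : ℂ) • (w + star w), LP.smul_mem (add_mem hw (star_mem hw)) _, fun z => ?_⟩
  simp [Complex.re_eq_add_conj]
  ring

lemma IsLP.im {w : C(Circle, ℂ)} (hw : w ∈ LP) : IsLP (fun z => ((w z).im : ℂ)) := by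
  have := IsLP.re (LP.smul_mem hw (-Complex.I))
  simpa using this

/-- Polynomial loops in the unit quaternions. -/
def S : Submonoid C(Circle, ℍ[ℝ]) where
  carrier := {f | (∀ z, ‖f z‖ = 1) ∧ IsLP (fun z => ((f z).re : ℂ)) ∧
    IsLP (fun z => ((f z).imI : ℂ)) ∧ IsLP (fun z => ((f z).imJ : ℂ)) ∧
    IsLP (fun z => ((f z).imK : ℂ))}
  one_mem' := by
    refine ⟨by simp, ?_, ?_, ?_, ?_⟩ <;> simpa using IsLP.const _
  mul_mem' := by
    rintro f g ⟨h0, h1, h2, h3, h4⟩ ⟨k0, k1, k2, k3, k4⟩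
    refine ⟨by simp [h0, k0], ?_, ?_, ?_, ?_⟩
    · simpa using (((h1.mul k1).sub (h2.mul k2)).sub (h3.mul k3)).sub (h4.mul k4)
    · simpa using (((h1.mul k2).add (h2.mul k1)).add (h3.mul k4)).sub (h4.mul k3)
    · simpa using (((h1.mul k3).sub (h2.mul k4)).add (h3.mul k1)).add (h4.mul k2)
    · simpa using (((h1.mul k4).add (h2.mul k3)).sub (h3.mul k2)).add (h4.mul k1)

/-- The closure of polynomial loops. -/
noncomputable def K : Submonoid C(Circle, ℍ[ℝ]) := S.topologicalClosure

lemma isClosed_K : IsClosed (K : Set C(Circle, ℍ[ℝ])) := S.isClosed_topologicalClosure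

lemma S_le_K : S ≤ K := S.le_topologicalClosure

noncomputable instance : NormedAlgebra ℚ C(Circle, ℍ[ℝ]) := .restrictScalars ℚ ℝ _

lemma exp_apply (x : C(Circle, ℍ[ℝ])) (z : Circle) : exp x z = exp (x z) := by
  exact map_exp ((Pi.evalRingHom (fun _ : Circle => ℍ[ℝ]) z).comp ContinuousMap.coeFnRingHom)
    (continuous_eval_const z) x

section trotter
variable {A : Type*} [NormedRing A] [NormOneClass A]

lemma norm_pow_sub (a b : A) (ha : ‖a‖ ≤ 1) (hb : ‖b‖ ≤ 1) (n : ℕ) :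
    ‖a ^ n - b ^ n‖ ≤ n * ‖a - b‖ := by
  induction n with
  | zero => simp
  | succ n ih =>
    have : a ^ (n + 1) - b ^ (n + 1) = a ^ n * (a - b) + (a ^ n - b ^ n) * b := by
      rw [pow_succ, pow_succ]; noncomm_ring
    rw [this]
    have h1 : ‖a ^ n‖ ≤ 1 := (norm_pow_le a n).trans (pow_le_one₀ (norm_nonneg _) ha)
    have h2 : ‖a ^ n * (a - b)‖ ≤ 1 * ‖a - b‖ := norm_mul_le_of_le h1 le_rfl
    have h3 : ‖(a ^ n - b ^ n) * b‖ ≤ (n * ‖a - b‖) * 1 := norm_mul_le_of_le ih hb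
    refine (norm_add_le _ _).trans ?_
    push_cast
    linarith

lemma trotter [NormedAlgebra ℝ A] [CompleteSpace A] (x y : A) (hx : ∀ t : ℝ, ‖exp (t • x)‖ ≤ 1) (hy : ∀ t : ℝ, ‖exp (t • y)‖ ≤ 1)
    (hxy : ∀ t : ℝ, ‖exp (t • (x + y))‖ ≤ 1) :
    Tendsto (fun n : ℕ => (exp (((n : ℝ) + 1)⁻¹ • x) * exp (((n : ℝ) + 1)⁻¹ • y)) ^ (n + 1))
      atTop (𝓝 (exp (x + y))) := by
  let _ : NormedAlgebra ℚ A := .restrictScalars ℚ ℝ A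
  let φ : ℝ → A := fun t => exp (t • x) * exp (t • y) - exp (t • (x + y))
  have hφ : HasDerivAt φ 0 0 := by
    have := ((hasDerivAt_exp_smul_const (𝕂 := ℝ) x 0).mul
      (hasDerivAt_exp_smul_const (𝕂 := ℝ) y 0)).sub
      (hasDerivAt_exp_smul_const (𝕂 := ℝ) (x + y) 0)
    exact this.congr_deriv (by simp)
  have h0 : φ 0 = 0 := by simp [φ]
  have hs := hasDerivAt_iff_tendsto_slope_zero.1 hφ
  have hn : Tendsto (fun n : ℕ => ((n : ℝ) + 1)⁻¹) atTop (𝓝[≠] 0) := by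
    refine tendsto_nhdsWithin_iff.2 ⟨?_, Eventually.of_forall fun n => ?_⟩
    · simpa using tendsto_one_div_add_atTop_nhds_zero_nat (𝕜 := ℝ)
    · simp only [Set.mem_compl_iff, Set.mem_singleton_iff]; positivity
  have h1 := (hs.comp hn).norm
  rw [tendsto_iff_norm_sub_tendsto_zero]
  refine squeeze_zero (fun _ => norm_nonneg _) (fun n => ?_) (by simpa using h1)
  have hpos : (0 : ℝ) < (n : ℝ) + 1 := by positivity
  have e : exp (x + y) = exp (((n : ℝ) + 1)⁻¹ • (x + y)) ^ (n + 1) := by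
    rw [← exp_nsmul, ← Nat.cast_smul_eq_nsmul ℝ, smul_smul]
    push_cast
    rw [mul_inv_cancel₀ hpos.ne', one_smul]
  rw [e]
  refine (norm_pow_sub _ _ ?_ (hxy _) _).trans ?_
  · simpa using norm_mul_le_of_le (hx ((n : ℝ) + 1)⁻¹) (hy ((n : ℝ) + 1)⁻¹)
  · simp only [h0, sub_zero, norm_smul, φ]
    rw [Real.norm_of_nonneg hpos.le]
    push_cast
    rfl

end trotter

lemma norm_exp_le (x : C(Circle, ℍ[ℝ])) (hx : ∀ z, (x z).re = 0) (t : ℝ) :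
    ‖exp (t • x)‖ ≤ 1 := by
  rw [ContinuousMap.norm_le _ zero_le_one]
  intro z
  rw [exp_apply]
  simp [hx]

/-- The Lie algebra of `K`. -/
noncomputable def L : Submodule ℝ C(Circle, ℍ[ℝ]) where
  carrier := {x | (∀ z, (x z).re = 0) ∧ ∀ t : ℝ, exp (t • x) ∈ K}
  zero_mem' := ⟨by simp, by simp [one_mem]⟩
  smul_mem' := by
    rintro c x ⟨h1, h2⟩
    refine ⟨by simp [h1], fun t => ?_⟩
    rw [smul_smul]
    exact h2 _
  add_mem' := by
    rintro x y ⟨h1, h2⟩ ⟨k1, k2⟩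
    refine ⟨by simp [h1, k1], fun t => ?_⟩
    have hx : ∀ z, ((t • x) z).re = 0 := by simp [h1]
    have hy : ∀ z, ((t • y) z).re = 0 := by simp [k1]
    have hxy : ∀ z, ((t • x + t • y) z).re = 0 := by simp [h1, k1]
    rw [smul_add]
    refine isClosed_K.mem_of_tendsto (trotter _ _ (norm_exp_le _ hx) (norm_exp_le _ hy)
      (norm_exp_le _ hxy)) (Eventually.of_forall fun n => ?_)
    refine pow_mem (mul_mem ?_ ?_) _
    · rw [smul_smul]; exact h2 _
    · rw [smul_smul]; exact k2 _

lemma isClosed_L : IsClosed (L : Set C(Circle, ℍ[ℝ])) := by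
  have : (L : Set C(Circle, ℍ[ℝ])) =
      (⋂ z : Circle, {x | (x z).re = 0}) ∩ ⋂ t : ℝ, {x | exp (t • x) ∈ K} := by
    ext x; simp [L]
  rw [this]
  refine (isClosed_iInter fun z => ?_).inter (isClosed_iInter fun t => ?_)
  · exact isClosed_eq (Quaternion.continuous_re.comp (continuous_eval_const z))
      continuous_const
  · exact isClosed_K.preimage (exp_continuous.comp (continuous_const_smul t))

/-- `f ↦ Re f • u`. -/
noncomputable def R (u : ℍ[ℝ]) : C(Circle, ℂ) →L[ℝ] C(Circle, ℍ[ℝ]) :=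
  (Complex.reCLM.smulRight u).compLeftContinuous ℝ Circle

lemma R_apply (u : ℍ[ℝ]) (f : C(Circle, ℂ)) (z : Circle) : R u f z = (f z).re • u := rfl

lemma exp_smul_unit (q : ℍ[ℝ]) (hq : q.re = 0) (hn : ‖q‖ = 1) (t : ℝ) :
    exp (t • q) = ((Real.cos t : ℝ) : ℍ[ℝ]) + Real.sin t • q := by
  rw [Quaternion.exp_of_re_eq_zero _ (by simp [hq]), norm_smul, hn, mul_one, Real.norm_eq_abs,
    Real.cos_abs, smul_smul]
  congr 2
  rcases abs_cases t with ⟨h, _⟩ | ⟨h, h'⟩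
  · rw [h]
    by_cases ht : t = 0
    · simp [ht]
    · field_simp
  · rw [h, Real.sin_neg]
    have : t ≠ 0 := h'.ne
    field_simp

lemma gen_mem (u v : ℍ[ℝ]) (hu : u.re = 0) (hv : v.re = 0)
    (h : ∀ a b : ℝ, ‖a • u + b • v‖ ^ 2 = a ^ 2 + b ^ 2) (w : C(Circle, ℂ)) (hw : w ∈ LP)
    (hw1 : ∀ z, ‖w z‖ = 1) : R u w + R v (-Complex.I • w) ∈ L := by
  have hG : ∀ z, (R u w + R v (-Complex.I • w)) z = (w z).re • u + (w z).im • v := by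
    intro z; simp [R_apply]
  have hre : ∀ z, ((R u w + R v (-Complex.I • w)) z).re = 0 := by
    intro z; rw [hG]; simp [hu, hv]
  have hnorm : ∀ z, ‖(R u w + R v (-Complex.I • w)) z‖ = 1 := by
    intro z
    rw [hG, ← sq_eq_sq₀ (norm_nonneg _) zero_le_one, h, one_pow]
    have := Complex.sq_norm (w z)
    rw [hw1, Complex.normSq_apply] at this
    nlinarith
  refine ⟨hre, fun t => S_le_K ?_⟩
  have hexp : ∀ z, exp (t • (R u w + R v (-Complex.I • w))) z =
      ((Real.cos t : ℝ) : ℍ[ℝ]) + Real.sin t • ((w z).re • u + (w z).im • v) := by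
    intro z
    rw [exp_apply, ContinuousMap.smul_apply, exp_smul_unit _ (hre z) (hnorm z), hG]
  have key : ∀ c s a b : ℝ, IsLP (fun z => ((c + s * ((w z).re * a + (w z).im * b) : ℝ) : ℂ)) := by
    intro c s a b
    have := (IsLP.const c).add ((IsLP.const s).mul
      (((IsLP.re hw).mul (IsLP.const a)).add ((IsLP.im hw).mul (IsLP.const b))))
    simpa using this
  refine ⟨fun z => ?_, ?_, ?_, ?_, ?_⟩
  · rw [exp_apply]; simp only [ContinuousMap.smul_apply, Quaternion.norm_exp, Quaternion.re_smul,
      hre]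
    simp
  · simpa only [hexp, Quaternion.re_add, Quaternion.imI_add, Quaternion.imJ_add, Quaternion.imK_add,
      Quaternion.re_coe, Quaternion.imI_coe, Quaternion.imJ_coe, Quaternion.imK_coe,
      Quaternion.re_smul, Quaternion.imI_smul, Quaternion.imJ_smul, Quaternion.imK_smul,
      smul_eq_mul] using key (Real.cos t) (Real.sin t) u.re v.re
  · simpa only [hexp, Quaternion.re_add, Quaternion.imI_add, Quaternion.imJ_add, Quaternion.imK_add,
      Quaternion.re_coe, Quaternion.imI_coe, Quaternion.imJ_coe, Quaternion.imK_coe,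
      Quaternion.re_smul, Quaternion.imI_smul, Quaternion.imJ_smul, Quaternion.imK_smul,
      smul_eq_mul] using key 0 (Real.sin t) u.imI v.imI
  · simpa only [hexp, Quaternion.re_add, Quaternion.imI_add, Quaternion.imJ_add, Quaternion.imK_add,
      Quaternion.re_coe, Quaternion.imI_coe, Quaternion.imJ_coe, Quaternion.imK_coe,
      Quaternion.re_smul, Quaternion.imI_smul, Quaternion.imJ_smul, Quaternion.imK_smul,
      smul_eq_mul] using key 0 (Real.sin t) u.imJ v.imJ
  · simpa only [hexp, Quaternion.re_add, Quaternion.imI_add, Quaternion.imJ_add, Quaternion.imK_add,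
      Quaternion.re_coe, Quaternion.imI_coe, Quaternion.imJ_coe, Quaternion.imK_coe,
      Quaternion.re_smul, Quaternion.imI_smul, Quaternion.imJ_smul, Quaternion.imK_smul,
      smul_eq_mul] using key 0 (Real.sin t) u.imK v.imK

lemma R_mem (u v : ℍ[ℝ]) (hu : u.re = 0) (hv : v.re = 0)
    (h : ∀ a b : ℝ, ‖a • u + b • v‖ ^ 2 = a ^ 2 + b ^ 2) (f : C(Circle, ℂ)) : R u f ∈ L := by
  have unit : ∀ w : C(Circle, ℂ), w ∈ LP → (∀ z, ‖w z‖ = 1) → R u w ∈ L := by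
    intro w hw hw1
    have h1 := gen_mem u v hu hv h w hw hw1
    have h2 := gen_mem u (-v) hu (by simp [hv]) (fun a b => by simpa using h a (-b)) w hw hw1
    have h3 := L.smul_mem (2⁻¹ : ℝ) (L.add_mem h1 h2)
    convert h3 using 1
    ext1 z
    simp only [R_apply, ContinuousMap.smul_apply, ContinuousMap.add_apply]
    module
  have mono_mem : ∀ (c : ℂ) (n : ℤ), R u (c • mono n) ∈ L := by
    intro c n
    have hm : mono n ∈ LP := Algebra.subset_adjoin ⟨n, rfl⟩
    by_cases hc : c = 0
    · simp [hc]
    have h1 := unit ((c / ‖c‖ : ℂ) • mono n) (LP.smul_mem hm _) (fun z => by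
      rw [ContinuousMap.smul_apply, norm_smul]
      have h1 : ‖mono n z‖ = 1 := Circle.norm_coe _
      rw [h1]
      simp [hc])
    have h2 := L.smul_mem ‖c‖ h1
    rw [← map_smul] at h2
    convert h2 using 2
    ext z
    have : (‖c‖ : ℂ) ≠ 0 := by simpa using hc
    simp only [ContinuousMap.smul_apply, smul_eq_mul, Complex.real_smul]
    field_simp
  have LP_mem : ∀ w ∈ LP, R u w ∈ L := by
    intro w hw
    have h : w ∈ Submodule.span ℂ (Set.range mono) := by rw [← LP_coe]; exact hw
    rw [Finsupp.mem_span_range_iff_exists_finsupp] at h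
    obtain ⟨a, rfl⟩ := h
    rw [Finsupp.sum, map_sum]
    exact L.sum_mem fun n _ => mono_mem _ _
  have hcl : IsClosed {f | R u f ∈ L} := isClosed_L.preimage (R u).continuous
  exact hcl.closure_subset_iff.2 LP_mem (LP_dense f)

lemma norm_sq_eq (q : ℍ[ℝ]) : ‖q‖ ^ 2 = q.re ^ 2 + q.imI ^ 2 + q.imJ ^ 2 + q.imK ^ 2 := by
  rw [sq, ← Quaternion.normSq_eq_norm_mul_self, Quaternion.normSq_def']

/-- A quaternion unit. -/
noncomputable def qI : ℍ[ℝ] := ⟨0, 1, 0, 0⟩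

@[simp] lemma qI_re : qI.re = 0 := rfl
@[simp] lemma qI_imI : qI.imI = 1 := rfl
@[simp] lemma qI_imJ : qI.imJ = 0 := rfl
@[simp] lemma qI_imK : qI.imK = 0 := rfl

/-- A quaternion unit. -/
noncomputable def qJ : ℍ[ℝ] := ⟨0, 0, 1, 0⟩

@[simp] lemma qJ_re : qJ.re = 0 := rfl
@[simp] lemma qJ_imI : qJ.imI = 0 := rfl
@[simp] lemma qJ_imJ : qJ.imJ = 1 := rfl
@[simp] lemma qJ_imK : qJ.imK = 0 := rfl

/-- A quaternion unit. -/
noncomputable def qK : ℍ[ℝ] := ⟨0, 0, 0, 1⟩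

@[simp] lemma qK_re : qK.re = 0 := rfl
@[simp] lemma qK_imI : qK.imI = 0 := rfl
@[simp] lemma qK_imJ : qK.imJ = 0 := rfl
@[simp] lemma qK_imK : qK.imK = 1 := rfl

/-- A real continuous function, complexified. -/
noncomputable def cx (f : Circle → ℝ) (hf : Continuous f) : C(Circle, ℂ) :=
  ⟨fun z => (f z : ℂ), Complex.continuous_ofReal.comp hf⟩

lemma imag_mem (x : C(Circle, ℍ[ℝ])) (hx : ∀ z, (x z).re = 0) : x ∈ L := by
  have h1 := R_mem qI qJ rfl rfl (fun a b => by simp [norm_sq_eq])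
    (cx (fun z => (x z).imI) (Quaternion.continuous_imI.comp x.continuous))
  have h2 := R_mem qJ qK rfl rfl (fun a b => by simp [norm_sq_eq])
    (cx (fun z => (x z).imJ) (Quaternion.continuous_imJ.comp x.continuous))
  have h3 := R_mem qK qI rfl rfl (fun a b => by simp [norm_sq_eq, add_comm])
    (cx (fun z => (x z).imK) (Quaternion.continuous_imK.comp x.continuous))
  convert L.add_mem (L.add_mem h1 h2) h3 using 1
  ext1 z
  ext <;> simp [R_apply, cx, hx]

lemma exp_mem_K (x : C(Circle, ℍ[ℝ])) (hx : ∀ z, (x z).re = 0) : exp x ∈ K := by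
  simpa using (imag_mem x hx).2 1

lemma mem_K_of_ne (q : C(Circle, ℍ[ℝ])) (hq : ∀ z, ‖q z‖ = 1) (hne : ∀ z, q z ≠ -1) :
    q ∈ K := by
  have hsq : ∀ z, (q z).re ^ 2 + ‖(q z).im‖ ^ 2 = 1 := by
    intro z
    have := norm_sq_eq (q z)
    have h2 := norm_sq_eq (q z).im
    rw [hq] at this
    simp at h2
    linarith
  have hlt : ∀ z, -1 < (q z).re := by
    intro z
    by_contra hcon
    have h0 := hsq z
    have hre : (q z).re = -1 := by nlinarith [sq_nonneg ‖(q z).im‖]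
    have him : (q z).im = 0 := by
      rw [hre] at h0
      have : ‖(q z).im‖ ^ 2 = 0 := by linarith
      simpa using this
    apply hne z
    rw [← Quaternion.re_add_im (q z), him, hre]
    simp
  have hle : ∀ z, (q z).re ≤ 1 := fun z => by nlinarith [hsq z, sq_nonneg ‖(q z).im‖]
  have hsin : ∀ z, Real.sin (Real.arccos (q z).re) = ‖(q z).im‖ := by
    intro z
    rw [Real.sin_arccos, ← Real.sqrt_sq (norm_nonneg (q z).im)]
    congr 1
    linarith [hsq z]
  have hpi : ∀ z, Real.arccos (q z).re < Real.pi := by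
    intro z
    refine lt_of_le_of_ne (Real.arccos_le_pi _) fun h => ?_
    rw [Real.arccos_eq_pi] at h
    linarith [hlt z]
  have hsinc : ∀ z, Real.sinc (Real.arccos (q z).re) ≠ 0 := by
    intro z
    by_cases h0 : Real.arccos (q z).re = 0
    · simp [h0]
    · rw [Real.sinc_of_ne_zero h0]
      have hp : 0 < Real.arccos (q z).re := lt_of_le_of_ne (Real.arccos_nonneg _) (Ne.symm h0)
      exact (div_pos (Real.sin_pos_of_pos_of_lt_pi hp (hpi z)) hp).ne'
  let x : C(Circle, ℍ[ℝ]) := ⟨fun z => (Real.sinc (Real.arccos (q z).re))⁻¹ • (q z).im, by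
    have hc : Continuous fun z => Real.sinc (Real.arccos (q z).re) :=
      Real.continuous_sinc.comp (Real.continuous_arccos.comp
        (Quaternion.continuous_re.comp q.continuous))
    exact (hc.inv₀ hsinc).smul (Quaternion.continuous_im.comp q.continuous)⟩
  have hx : ∀ z, (x z).re = 0 := fun z => by simp [x]
  have : q = exp x := by
    ext1 z
    rw [exp_apply, Quaternion.exp_of_re_eq_zero _ (hx z)]
    have hxz : x z = (Real.sinc (Real.arccos (q z).re))⁻¹ • (q z).im := rfl
    by_cases h0 : Real.arccos (q z).re = 0
    · have him : (q z).im = 0 := by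
        have := hsin z
        rw [h0, Real.sin_zero] at this
        simpa using this.symm
      have hre : (q z).re = 1 := by
        rw [Real.arccos_eq_zero] at h0
        linarith [hle z]
      rw [hxz, him]
      conv_lhs => rw [← Quaternion.re_add_im (q z), him, hre]
      simp
    · have hp : 0 < Real.arccos (q z).re := lt_of_le_of_ne (Real.arccos_nonneg _) (Ne.symm h0)
      have hs := Real.sin_pos_of_pos_of_lt_pi hp (hpi z)
      have hn : ‖x z‖ = Real.arccos (q z).re := by
        rw [hxz, norm_smul, Real.sinc_of_ne_zero h0, ← hsin z, inv_div, Real.norm_of_nonneg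
          (div_pos hp hs).le]
        field_simp
      rw [hn, hxz, smul_smul, Real.sinc_of_ne_zero h0, inv_div, Real.cos_arccos (hlt z).le (hle z)]
      conv_lhs => rw [← Quaternion.re_add_im (q z)]
      congr 1
      rw [div_mul_div_cancel₀ h0, div_self hs.ne', one_smul]
  rw [this]
  exact exp_mem_K x hx

/-- Loops that are `C¹` in the angle. -/
noncomputable def D : Submodule ℝ C(Circle, ℍ[ℝ]) where
  carrier := {P | ContDiff ℝ 1 fun θ : ℝ => P (Circle.exp θ)}
  zero_mem' := by
    change ContDiff ℝ 1 fun θ : ℝ => (0 : ℍ[ℝ])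
    exact contDiff_const
  add_mem' := by
    intro P Q h k
    change ContDiff ℝ 1 fun θ : ℝ => P (Circle.exp θ) + Q (Circle.exp θ)
    exact ContDiff.add h k
  smul_mem' := by
    intro c P h
    change ContDiff ℝ 1 fun θ : ℝ => c • P (Circle.exp θ)
    exact ContDiff.const_smul c h

lemma R_mem_D (u : ℍ[ℝ]) (w : C(Circle, ℂ)) (hw : w ∈ LP) : R u w ∈ D := by
  obtain ⟨a, ha⟩ := mem_LP hw
  change ContDiff ℝ 1 fun θ : ℝ => (w (Circle.exp θ)).re • u
  have h : ContDiff ℝ 1 fun θ : ℝ => w (Circle.exp θ) := by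
    have : (fun θ : ℝ => w (Circle.exp θ)) =
        fun θ : ℝ => ∑ k ∈ a.support, a k * Complex.exp (k * (θ * Complex.I)) := by
      funext θ
      rw [ha, Finsupp.sum]
      refine Finset.sum_congr rfl fun k _ => ?_
      rw [Circle.coe_exp, ← Complex.exp_int_mul]
    rw [this]
    refine ContDiff.sum fun k _ => contDiff_const.mul (ContDiff.cexp (contDiff_const.mul
      (ContDiff.mul ?_ contDiff_const)))
    exact Complex.ofRealCLM.contDiff
  exact (Complex.reCLM.contDiff.comp h).smul contDiff_const

lemma R_mem_closure (u : ℍ[ℝ]) (f : C(Circle, ℂ)) : R u f ∈ D.topologicalClosure := by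
  have hcl : IsClosed {f | R u f ∈ D.topologicalClosure} :=
    D.isClosed_topologicalClosure.preimage (R u).continuous
  exact hcl.closure_subset_iff.2
    (fun w hw => D.le_topologicalClosure (R_mem_D u w hw)) (LP_dense f)

lemma mem_closure_D (x : C(Circle, ℍ[ℝ])) : x ∈ closure (D : Set C(Circle, ℍ[ℝ])) := by
  have h0 := R_mem_closure 1
    (cx (fun z => (x z).re) (Quaternion.continuous_re.comp x.continuous))
  have h1 := R_mem_closure qI
    (cx (fun z => (x z).imI) (Quaternion.continuous_imI.comp x.continuous))
  have h2 := R_mem_closure qJ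
    (cx (fun z => (x z).imJ) (Quaternion.continuous_imJ.comp x.continuous))
  have h3 := R_mem_closure qK
    (cx (fun z => (x z).imK) (Quaternion.continuous_imK.comp x.continuous))
  have : x ∈ D.topologicalClosure := by
    convert add_mem (add_mem (add_mem h0 h1) h2) h3 using 1
    ext1 z
    ext <;> simp [R_apply, cx]
  exact this

lemma const_mem_S (w : ℍ[ℝ]) (hw : ‖w‖ = 1) : ContinuousMap.const Circle w ∈ S :=
  ⟨fun _ => hw, IsLP.const (w.re : ℂ), IsLP.const (w.imI : ℂ), IsLP.const (w.imJ : ℂ),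
    IsLP.const (w.imK : ℂ)⟩

lemma normalize_mem (P h : C(Circle, ℍ[ℝ])) (hP : P ∈ D) (hP0 : ∀ z, P z ≠ 0)
    (hh : ∀ z, h z = ‖P z‖⁻¹ • P z) : h ∈ K := by
  have hF : ContDiff ℝ 1 fun x : ℝ × ℝ => Real.exp x.1 • P (Circle.exp x.2) :=
    (Real.contDiff_exp.comp contDiff_fst).smul (ContDiff.comp (g := fun θ : ℝ => P (Circle.exp θ))
      hP contDiff_snd)
  have hd := hF.dense_compl_range_of_finrank_lt_finrank (by
    rw [Quaternion.finrank_eq_four]; simp)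
  obtain ⟨p, hp0, hp⟩ := hd.exists_mem_open (isOpen_compl_singleton (x := (0 : ℍ[ℝ])))
    ⟨1, by simp⟩
  have hpn : ‖p‖ ≠ 0 := by simpa using hp
  set w : ℍ[ℝ] := ‖p‖⁻¹ • p with hw
  have hw1 : ‖w‖ = 1 := by rw [hw, norm_smul]; simp [hpn]
  have hw0 : w ≠ 0 := by rw [← norm_ne_zero_iff, hw1]; exact one_ne_zero
  have hne : ∀ z, h z ≠ w := by
    intro z hz
    apply hp0
    have hPn : 0 < ‖P z‖ := norm_pos_iff.2 (hP0 z)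
    have hpp : 0 < ‖p‖ := lt_of_le_of_ne (norm_nonneg _) hpn.symm
    refine ⟨(Real.log (‖p‖ * ‖P z‖⁻¹), Complex.arg (z : ℂ)), ?_⟩
    simp only [Circle.exp_arg]
    rw [Real.exp_log (by positivity), mul_smul, ← hh, hz, hw, smul_smul, mul_inv_cancel₀ hpn,
      one_smul]
  have h1 : h * ContinuousMap.const Circle (-w⁻¹) ∈ K := by
    apply mem_K_of_ne
    · intro z
      have : ‖P z‖ ≠ 0 := norm_ne_zero_iff.2 (hP0 z)
      simp [hh, norm_smul, hw1, this]
    · intro z hz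
      apply hne z
      simp only [ContinuousMap.mul_apply, ContinuousMap.const_apply, mul_neg, neg_inj] at hz
      exact (mul_inv_eq_one₀ hw0).1 hz
  have h2 := mul_mem h1 (S_le_K (const_mem_S (-w) (by simpa using hw1)))
  convert h2 using 1
  ext1 z
  simp [mul_assoc, hw0]

lemma unit_mem_K (g : C(Circle, ℍ[ℝ])) (hg : ∀ z, ‖g z‖ = 1) : g ∈ K := by
  have : g ∈ closure (K : Set C(Circle, ℍ[ℝ])) := by
    rw [Metric.mem_closure_iff]
    intro ε hε
    obtain ⟨P, hPD, hP⟩ := Metric.mem_closure_iff.1 (mem_closure_D g) (min (ε / 4) (1 / 2))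
      (by positivity)
    have hz : ∀ z, ‖g z - P z‖ < min (ε / 4) (1 / 2) := fun z => by
      rw [← dist_eq_norm]
      exact (ContinuousMap.dist_apply_le_dist z).trans_lt hP
    have hn : ∀ z, |1 - ‖P z‖| ≤ ‖g z - P z‖ := fun z => by
      rw [← hg z]; exact abs_norm_sub_norm_le _ _
    have hpos : ∀ z, 0 < ‖P z‖ := fun z => by
      have h1 := (abs_le.1 (hn z)).2
      have h2 := (hz z).trans_le (min_le_right _ _)
      linarith
    let h : C(Circle, ℍ[ℝ]) := ⟨fun z => ‖P z‖⁻¹ • P z,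
      (P.continuous.norm.inv₀ fun z => (hpos z).ne').smul P.continuous⟩
    refine ⟨h, normalize_mem P h hPD (fun z => norm_pos_iff.1 (hpos z)) fun z => rfl, ?_⟩
    refine lt_of_le_of_lt ((ContinuousMap.dist_le (C := ε / 2) (by positivity)).2 fun z => ?_)
      (half_lt_self hε)
    have h3 : ‖P z - h z‖ = |1 - ‖P z‖| := by
      have : P z - h z = ((‖P z‖ - 1) * ‖P z‖⁻¹) • P z := by
        change P z - ‖P z‖⁻¹ • P z = _
        rw [sub_mul, mul_inv_cancel₀ (hpos z).ne', one_mul, sub_smul, one_smul]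
      rw [this, norm_smul, norm_mul, norm_inv, norm_norm, mul_assoc,
        inv_mul_cancel₀ (hpos z).ne', mul_one, Real.norm_eq_abs, abs_sub_comm]
    have h4 := (hz z).trans_le (min_le_left _ _)
    have h5 := hn z
    have h6 : ‖g z - h z‖ ≤ ‖g z - P z‖ + ‖P z - h z‖ := norm_sub_le_norm_sub_add_norm_sub _ _ _
    rw [dist_eq_norm]
    linarith
  rwa [isClosed_K.closure_eq] at this

/-- `SU(2)` -/
abbrev SU2 := Matrix.specialUnitaryGroup (Fin 2) ℂ

lemma SU2_star (M : SU2) : star (M : Matrix (Fin 2) (Fin 2) ℂ) = Matrix.adjugate M.1 := by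
  obtain ⟨h1, h2⟩ := Matrix.mem_specialUnitaryGroup_iff.1 M.2
  have h3 := Matrix.mem_unitaryGroup_iff.1 h1
  calc star (M : Matrix (Fin 2) (Fin 2) ℂ)
      = (Matrix.adjugate M.1 * M.1) * star (M : Matrix (Fin 2) (Fin 2) ℂ) := by
        rw [Matrix.adjugate_mul, h2, one_smul, one_mul]
    _ = Matrix.adjugate M.1 := by rw [mul_assoc, h3, mul_one]

/-- The matrix of a quaternion. -/
noncomputable def mat (q : ℍ[ℝ]) : Matrix (Fin 2) (Fin 2) ℂ :=
  !![⟨q.re, q.imI⟩, ⟨q.imJ, q.imK⟩; ⟨-q.imJ, q.imK⟩, ⟨q.re, -q.imI⟩]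

/-- The quaternion of an element of `SU(2)`. -/
noncomputable def quat (M : SU2) : ℍ[ℝ] :=
  ⟨(M.1 0 0).re, (M.1 0 0).im, (M.1 0 1).re, (M.1 0 1).im⟩

lemma mat_quat (M : SU2) : mat (quat M) = M := by
  have h := SU2_star M
  rw [Matrix.adjugate_fin_two] at h
  have h00 := congrFun (congrFun h 0) 0
  have h10 := congrFun (congrFun h 0) 1
  simp [Matrix.star_apply] at h00 h10
  have e1 : M.1 1 0 = - star (M.1 0 1) := by
    have := congrArg star h10
    simpa using this
  have e2 : M.1 1 1 = star (M.1 0 0) := by simpa using h00.symm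
  ext i j
  fin_cases i <;> fin_cases j <;> apply Complex.ext <;> simp [mat, quat, e1, e2]

lemma norm_quat (M : SU2) : ‖quat M‖ = 1 := by
  have h2 := (Matrix.mem_specialUnitaryGroup_iff.1 M.2).2
  rw [← mat_quat M, Matrix.det_fin_two] at h2
  have h3 := congrArg Complex.re h2
  simp [mat] at h3
  rw [← sq_eq_sq₀ (norm_nonneg _) zero_le_one, norm_sq_eq]
  linarith

lemma mat_mem (q : ℍ[ℝ]) (hq : ‖q‖ = 1) : mat q ∈ Matrix.specialUnitaryGroup (Fin 2) ℂ := by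
  have h := norm_sq_eq q
  rw [hq] at h
  rw [Matrix.mem_specialUnitaryGroup_iff, Matrix.mem_unitaryGroup_iff]
  constructor
  · ext i j
    fin_cases i <;> fin_cases j <;> apply Complex.ext <;>
      simp [mat, Matrix.mul_apply, Fin.sum_univ_two, Matrix.star_apply] <;> linarith
  · rw [Matrix.det_fin_two]
    apply Complex.ext <;> simp [mat] <;> linarith

lemma continuous_mat : Continuous mat := by
  have e : ∀ a b : ℍ[ℝ] → ℝ, Continuous a → Continuous b →
      Continuous fun q => (⟨a q, b q⟩ : ℂ) := fun a b ha hb => by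
    have : (fun q => (⟨a q, b q⟩ : ℂ)) = fun q => (a q : ℂ) + (b q : ℂ) * Complex.I := by
      funext q; exact Complex.mk_eq_add_mul_I _ _
    rw [this]
    exact (Complex.continuous_ofReal.comp ha).add
      ((Complex.continuous_ofReal.comp hb).mul continuous_const)
  refine continuous_matrix fun i j => ?_
  fin_cases i <;> fin_cases j
  · exact e _ _ Quaternion.continuous_re Quaternion.continuous_imI
  · exact e _ _ Quaternion.continuous_imJ Quaternion.continuous_imK
  · exact e _ _ Quaternion.continuous_imJ.neg Quaternion.continuous_imK
  · exact e _ _ Quaternion.continuous_re Quaternion.continuous_imI.neg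

lemma continuous_quat : Continuous quat := by
  have h : ∀ i j, Continuous fun M : SU2 => M.1 i j := fun i j =>
    continuous_subtype_val.matrix_elem i j
  have : quat = fun M : SU2 => (M.1 0 0).re • (1 : ℍ[ℝ]) + (M.1 0 0).im • qI
      + (M.1 0 1).re • qJ + (M.1 0 1).im • qK := by
    funext M
    ext <;> simp [quat]
  rw [this]
  exact ((((Complex.continuous_re.comp (h 0 0)).smul continuous_const).add
    ((Complex.continuous_im.comp (h 0 0)).smul continuous_const)).add
    ((Complex.continuous_re.comp (h 0 1)).smul continuous_const)).add
    ((Complex.continuous_im.comp (h 0 1)).smul continuous_const)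

lemma quat_mat (q : ℍ[ℝ]) (hq : ‖q‖ = 1) : quat ⟨mat q, mat_mem q hq⟩ = q := by
  ext <;> simp [quat, mat]

lemma inducing_quat : IsInducing quat :=
  IsInducing.of_comp continuous_quat continuous_mat (by
    have : mat ∘ quat = Subtype.val := funext mat_quat
    rw [this]
    exact IsInducing.subtypeVal)

end PLoop

open PLoop in
/-- Polynomial loops are dense in the continuous loop group of `SU(2)`: the continuous maps
`S¹ → SU(2)` all of whose matrix entries are restrictions to the circle of Laurent
polynomials form a dense subset of `C(S¹, SU(2))` with the compact-open topology
(= uniform convergence). -/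
theorem polynomial_loops_dense_in_loopGroup_SU2 :
    Dense {f : C(Circle, Matrix.specialUnitaryGroup (Fin 2) ℂ) |
        ∀ i j : Fin 2, ∃ a : ℤ →₀ ℂ,
          ∀ z : Circle, ((f z : Matrix (Fin 2) (Fin 2) ℂ) i j) = a.sum fun k c => c * (z : ℂ) ^ k} := by
  intro f
  have hind := ContinuousMap.isInducing_postcomp (X := Circle) ⟨quat, continuous_quat⟩ inducing_quat
  rw [hind.closure_eq_preimage_closure_image]
  refine closure_mono ?_ (unit_mem_K (ContinuousMap.comp ⟨quat, continuous_quat⟩ f)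
    fun z => norm_quat _)
  rintro s ⟨hs, h0, h1, h2, h3⟩
  refine ⟨⟨fun z => ⟨mat (s z), mat_mem _ (hs z)⟩,
    (continuous_mat.comp s.continuous).subtype_mk _⟩, ?_, ?_⟩
  · have key : ∀ g : Circle → ℂ, IsLP g → ∃ a : ℤ →₀ ℂ,
        ∀ z : Circle, g z = a.sum fun k c => c * (z : ℂ) ^ k := by
      rintro g ⟨w, hw, hwg⟩
      obtain ⟨a, ha⟩ := mem_LP hw
      exact ⟨a, fun z => by rw [← hwg, ha]⟩
    intro i j
    apply key
    fin_cases i <;> fin_cases j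
    · convert h0.add (h1.mul (IsLP.const Complex.I)) using 2
      exact Complex.mk_eq_add_mul_I _ _
    · convert h2.add (h3.mul (IsLP.const Complex.I)) using 2
      exact Complex.mk_eq_add_mul_I _ _
    · convert (h3.mul (IsLP.const Complex.I)).sub h2 using 2
      refine (Complex.mk_eq_add_mul_I _ _).trans ?_
      push_cast
      ring
    · convert h0.sub (h1.mul (IsLP.const Complex.I)) using 2
      refine (Complex.mk_eq_add_mul_I _ _).trans ?_
      push_cast
      ring
  · ext1 z
    exact quat_mat _ (hs z)
end

section
/- Let K be an algebraically closed field of characteristic zero, L a finite-dimensional semisimple Lie algebra over K, and H a Cartan subalgebra of L. Then the Lie subalgebra of L generated by the root spaces L_α for all nonzero roots α (the nonzero weight spaces of the adjoint action of H on L) is all of L. -/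
/-- A finite-dimensional semisimple Lie algebra `L` over an algebraically closed field of
characteristic zero is generated, as a Lie algebra, by the root spaces `L_α` for the
nonzero roots `α` of a Cartan subalgebra `H`. -/
theorem semisimple_generated_by_rootSpaces
    (K : Type*) [Field K] [IsAlgClosed K] [CharZero K]
    (L : Type*) [LieRing L] [LieAlgebra K L] [FiniteDimensional K L]
    [LieAlgebra.IsSemisimple K L]
    (H : LieSubalgebra K L) [H.IsCartanSubalgebra] :
    LieSubalgebra.lieSpan K L
      (⋃ (α : H → K) (_ : α ≠ 0), (LieAlgebra.rootSpace H α : Set L)) = ⊤ := by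
  set S := LieSubalgebra.lieSpan K L
      (⋃ (α : H → K) (_ : α ≠ 0), (LieAlgebra.rootSpace H α : Set L)) with hS
  have hroot : ∀ α : H → K, α ≠ 0 → ∀ x ∈ LieAlgebra.rootSpace H α, x ∈ S := by
    intro α hα x hx
    exact LieSubalgebra.subset_lieSpan (Set.mem_iUnion₂.2 ⟨α, hα, hx⟩)
  have hH : ∀ x : H, (x : L) ∈ S := by
    intro x
    have htop : (⊤ : Submodule K H) ≤ S.toSubmodule.comap H.toSubmodule.subtype := by
      rw [← LieSubmodule.top_toSubmodule (R := K) (L := H) (M := H),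
        ← LieAlgebra.IsKilling.biSup_corootSpace_eq_top (K := K) (L := L) H]
      simp only [LieSubmodule.iSup_toSubmodule, iSup_le_iff]
      intro α hα y hy
      have hα0 : (α : H → K) ≠ 0 := by simpa using hα
      rw [LieSubmodule.mem_toSubmodule, LieAlgebra.mem_corootSpace] at hy
      have hle : Submodule.span K {x | ∃ y ∈ LieAlgebra.rootSpace H (α : H → K),
          ∃ z ∈ LieAlgebra.rootSpace H (-(α : H → K)), ⁅y, z⁆ = x} ≤ S.toSubmodule := by
        rw [Submodule.span_le]
        rintro _ ⟨y, hy, z, hz, rfl⟩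
        exact S.lie_mem (hroot _ hα0 y hy) (hroot _ (neg_ne_zero.2 hα0) z hz)
      exact hle hy
    exact htop (Submodule.mem_top (x := x))
  rw [eq_top_iff]
  intro x _
  have hx : x ∈ (⨆ α : H → K, LieAlgebra.rootSpace H α).toSubmodule := by
    simp [LieModule.iSup_genWeightSpace_eq_top K H L]
  have hle : (⨆ α : H → K, LieAlgebra.rootSpace H α).toSubmodule ≤ S.toSubmodule := by
    simp only [LieSubmodule.iSup_toSubmodule, iSup_le_iff]
    intro α y hy
    by_cases h : α = 0
    · subst h
      rw [LieAlgebra.rootSpace_zero_eq] at hy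
      exact hH ⟨y, by simpa using hy⟩
    · exact hroot α h y hy
  exact hle hx
end
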